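/- Let E = (E;⊕,',0,1) be a lattice effect algebra and define x·y := ((x'∧y)⊕y')' for all x,y ∈ E. Then ℝ(E) := (E;·,',0,1) is an effect groupoid, i.e., it satisfies all of the conditions (NG0)–(NG8). -/

import Mathlib

/-- An effect algebra: a partial algebra (E;⊕,',0,1). The partial operation ⊕ is
modeled by a definedness predicate `D` together with a total function `add` whose
value is only meaningful on defined pairs. -/
structure EffectAlgebra (E : Type*) where
  /-- definedness of `x ⊕ y` -/
  D : E → E → Prop
  /-- the value of `x ⊕ y` (meaningful only when `D x y`) -/
  add : E → E → E
  zero : E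
  one : E
  /-- the complement `x'` -/
  compl : E → E
  /-- (E1) commutativity -/
  E1 : ∀ x y, D x y → D y x ∧ add x y = add y x
  /-- (E2) associativity -/
  E2 : ∀ x y z, D x y → D (add x y) z →
    D y z ∧ D x (add y z) ∧ add (add x y) z = add x (add y z)
  /-- (E3) existence of the complement -/
  E3a : ∀ x, D x (compl x)
  E3b : ∀ x, add x (compl x) = one
  /-- (E3) uniqueness of the complement -/
  E3c : ∀ x y, D x y → add x y = one → y = compl x
  /-- (E4) -/
  E4 : ∀ x, D x one → x = zero

/-- The induced order of an effect algebra: `a ≤ b` iff `a ⊕ c = b` for some `c`. -/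
def EffectAlgebra.le {E : Type*} (A : EffectAlgebra E) (a b : E) : Prop :=
  ∃ c, A.D a c ∧ A.add a c = b

/-- A lattice effect algebra: an effect algebra whose induced order is a lattice,
with meet `inf` and join `sup`. -/
structure LatticeEffectAlgebra (E : Type*) extends EffectAlgebra E where
  inf : E → E → E
  sup : E → E → E
  inf_le_left : ∀ a b, toEffectAlgebra.le (inf a b) a
  inf_le_right : ∀ a b, toEffectAlgebra.le (inf a b) b
  le_inf : ∀ a b c, toEffectAlgebra.le c a → toEffectAlgebra.le c b →
    toEffectAlgebra.le c (inf a b)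
  le_sup_left : ∀ a b, toEffectAlgebra.le a (sup a b)
  le_sup_right : ∀ a b, toEffectAlgebra.le b (sup a b)
  sup_le : ∀ a b c, toEffectAlgebra.le a c → toEffectAlgebra.le b c →
    toEffectAlgebra.le (sup a b) c

/-- The total operation `x·y := ((x'∧y)⊕y')'` on a lattice effect algebra
(well defined since `x'∧y ≤ y`). -/
def LatticeEffectAlgebra.prod {E : Type*} (A : LatticeEffectAlgebra E) (x y : E) : E :=
  A.compl (A.add (A.inf (A.compl x) y) (A.compl y))

/-- An effect groupoid: an algebra (R;·,',0,1) of type (2,1,0,0) satisfying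
(NG0)–(NG8). -/
structure EffectGroupoid (R : Type*) where
  mul : R → R → R
  compl : R → R
  zero : R
  one : R
  /-- (NG0) -/
  ng0l : ∀ x, mul one x = x
  ng0r : ∀ x, mul x one = x
  /-- (NG1) -/
  ng1 : ∀ x, compl (compl x) = x
  /-- (NG2) -/
  ng2l : ∀ x, mul zero x = zero
  ng2r : ∀ x, mul x zero = zero
  /-- (NG3) -/
  ng3 : compl zero = one
  /-- (NG4) -/
  ng4l : ∀ x y, mul x (mul y (compl x)) = zero
  ng4r : ∀ x y, mul (mul y (compl x)) x = zero
  /-- (NG5) -/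
  ng5 : ∀ x y, mul x y =
    mul y (compl (mul (compl (mul (compl y) (compl x))) (compl x)))
  /-- (NG6) -/
  ng6a : ∀ x y, mul x (compl (mul (compl y) x)) = mul (compl (mul (compl y) x)) x
  ng6b : ∀ x y, mul (compl (mul (compl y) x)) x = mul (compl (mul (compl x) y)) y
  /-- (NG7) -/
  ng7 : ∀ x y z,
    mul (compl (mul (compl (mul x (compl y))) (compl y))) z =
    compl (mul (compl (mul (mul x z) (compl (mul y z)))) (compl (mul y z)))
  /-- (NG8) -/
  ng8 : ∀ x y z, mul (compl x) (compl y) = zero →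
    mul (compl (mul x y)) (compl z) = zero →
    mul (compl y) (compl z) = zero ∧
    mul (compl x) (compl (mul y z)) = zero ∧
    mul (mul x y) z = mul x (mul y z)

namespace EffectAlgebra

variable {E : Type*} (A : EffectAlgebra E)

theorem compl_compl (x : E) : A.compl (A.compl x) = x := by
  obtain ⟨hd, he⟩ := A.E1 _ _ (A.E3a x)
  exact (A.E3c _ _ hd (he.symm.trans (A.E3b x))).symm

theorem compl_one : A.compl A.one = A.zero :=
  A.E4 _ (A.E1 _ _ (A.E3a A.one)).1

theorem compl_zero : A.compl A.zero = A.one := by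
  rw [← A.compl_one, A.compl_compl]

theorem D_comm {x y : E} : A.D x y ↔ A.D y x :=
  ⟨fun h => (A.E1 _ _ h).1, fun h => (A.E1 _ _ h).1⟩

theorem add_zero (x : E) : A.D x A.zero ∧ A.add x A.zero = x := by
  obtain ⟨hd, he⟩ := A.E1 _ _ (A.E3a x)
  rw [A.E3b] at he
  have h1 := A.E3a A.one
  have h2 := A.E3b A.one
  rw [A.compl_one] at h1 h2
  rw [he] at h1 h2
  obtain ⟨h3, h4, h5⟩ := A.E2 _ _ _ hd h1
  refine ⟨h3, ?_⟩
  rw [A.E3c _ _ h4 (by rw [← h5, h2, he]), A.compl_compl]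

theorem add_compl_add {a b : E} (h : A.D a b) :
    A.D b (A.compl (A.add a b)) ∧ A.add b (A.compl (A.add a b)) = A.compl a := by
  obtain ⟨h1, h2, h3⟩ := A.E2 _ _ _ h (A.E3a _)
  exact ⟨h1, A.E3c _ _ h2 (by rw [← h3, A.E3b])⟩

theorem add_left_cancel {a b c : E} (hb : A.D a b) (hc : A.D a c)
    (h : A.add a b = A.add a c) : b = c := by
  have key : ∀ d, A.D a d → A.compl (A.add a (A.compl (A.add a d))) = d := by
    intro d hd
    obtain ⟨hd', he⟩ := A.E1 _ _ hd
    rw [he, (A.add_compl_add hd').2, A.compl_compl]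
  rw [← key b hb, ← key c hc, h]

theorem D_iff_le_compl {a b : E} : A.D a b ↔ A.le a (A.compl b) := by
  constructor
  · intro h
    exact ⟨_, A.add_compl_add (A.D_comm.1 h)⟩
  · rintro ⟨c, hd, he⟩
    have h := A.D_comm.1 (A.E3a b)
    obtain ⟨hd', he'⟩ := A.E1 _ _ hd
    rw [← he, he'] at h
    exact (A.E2 _ _ _ hd' h).1

theorem le_iff_D_compl {a b : E} : A.le a b ↔ A.D a (A.compl b) := by
  rw [D_iff_le_compl, compl_compl]

theorem compl_le_compl_iff {a b : E} : A.le (A.compl b) (A.compl a) ↔ A.le a b := by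
  rw [← D_iff_le_compl, D_comm, ← le_iff_D_compl]

theorem compl_le_comm {a b : E} : A.le (A.compl a) b ↔ A.le (A.compl b) a := by
  rw [le_iff_D_compl, D_comm, ← le_iff_D_compl]

theorem le_compl_comm {a b : E} : A.le a (A.compl b) ↔ A.le b (A.compl a) := by
  rw [← D_iff_le_compl, D_comm, D_iff_le_compl]

theorem le_refl (a : E) : A.le a a := ⟨_, A.add_zero a⟩

theorem le_trans {a b c : E} (hab : A.le a b) (hbc : A.le b c) : A.le a c := by
  obtain ⟨d, hd, rfl⟩ := hab
  obtain ⟨e, he, rfl⟩ := hbc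
  obtain ⟨-, h, h'⟩ := A.E2 _ _ _ hd he
  exact ⟨_, h, h'.symm⟩

theorem le_antisymm {a b : E} (hab : A.le a b) (hba : A.le b a) : a = b := by
  obtain ⟨d, hd, rfl⟩ := hab
  obtain ⟨e, he, h⟩ := hba
  obtain ⟨hde, h1, h2⟩ := A.E2 _ _ _ hd he
  have h3 : A.add d e = A.zero :=
    A.add_left_cancel h1 (A.add_zero a).1 (by rw [← h2, h, (A.add_zero a).2])
  have h4 : A.D (A.add d e) A.one := by
    rw [h3, ← A.compl_zero]
    exact A.E3a _
  rw [A.E4 e (A.E2 _ _ _ hde h4).1, (A.add_zero _).2] at h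
  exact h.symm

theorem zero_le (a : E) : A.le A.zero a :=
  ⟨a, A.D_comm.1 (A.add_zero a).1, by rw [← (A.E1 _ _ (A.add_zero a).1).2, (A.add_zero a).2]⟩

/-- The difference `b ⊖ a`, meaningful when `a ≤ b`. -/
def diff (b a : E) : E := A.compl (A.add a (A.compl b))

theorem diff_le {a b : E} (h : A.le a b) : A.le (A.diff b a) b := by
  rw [diff, compl_le_comm]
  obtain ⟨hd, he⟩ := A.E1 _ _ (A.le_iff_D_compl.1 h)
  exact ⟨_, hd, he.symm⟩

theorem diff_diff {a b : E} (h : A.le a b) : A.diff b (A.diff b a) = a := by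
  obtain ⟨hd, he⟩ := A.add_compl_add (A.le_iff_D_compl.1 h)
  rw [diff, diff, ← (A.E1 _ _ hd).2, he, compl_compl]

theorem diff_le_diff {a b c : E} (hab : A.le a b) (hbc : A.le b c) :
    A.le (A.diff c b) (A.diff c a) := by
  rw [diff, diff, compl_le_compl_iff]
  obtain ⟨d, hd, rfl⟩ := hab
  obtain ⟨hd', he⟩ := A.E1 _ _ hd
  rw [le_iff_D_compl, he] at hbc
  obtain ⟨-, h1, h2⟩ := A.E2 _ _ _ hd' hbc
  obtain ⟨h3, h4⟩ := A.E1 _ _ h1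
  exact ⟨d, h3, by rw [he, h2, h4]⟩

theorem diff_compl_compl {a b : E} (h : A.le a b) :
    A.diff (A.compl a) (A.compl b) = A.diff b a := by
  rw [diff, diff, compl_compl, (A.E1 _ _ (A.le_iff_D_compl.1 h)).2]

theorem diff_self (a : E) : A.diff a a = A.zero := by
  rw [diff, E3b, compl_one]

theorem diff_zero (a : E) : A.diff a A.zero = a := by
  rw [← A.diff_self a, A.diff_diff (A.le_refl a)]

end EffectAlgebra

namespace LatticeEffectAlgebra

variable {E : Type*} (A : LatticeEffectAlgebra E)

theorem inf_eq_left {a b : E} (h : A.le a b) : A.inf a b = a :=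
  A.le_antisymm (A.inf_le_left a b) (A.le_inf _ _ _ (A.le_refl a) h)

theorem inf_eq_right {a b : E} (h : A.le b a) : A.inf a b = b :=
  A.le_antisymm (A.inf_le_right a b) (A.le_inf _ _ _ h (A.le_refl b))

theorem inf_comm (a b : E) : A.inf a b = A.inf b a :=
  A.le_antisymm (A.le_inf _ _ _ (A.inf_le_right a b) (A.inf_le_left a b))
    (A.le_inf _ _ _ (A.inf_le_right b a) (A.inf_le_left b a))

theorem prod_eq_diff (x y : E) : A.prod x y = A.diff y (A.inf (A.compl x) y) := rfl

theorem prod_le_right (x y : E) : A.le (A.prod x y) y :=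
  A.diff_le (A.inf_le_right _ _)

theorem prod_eq_zero_iff {x y : E} : A.prod x y = A.zero ↔ A.D x y := by
  rw [A.D_comm, A.D_iff_le_compl]
  constructor
  · intro h
    have h1 := A.diff_diff (A.inf_le_right (A.compl x) y)
    rw [← prod_eq_diff, h, A.diff_zero] at h1
    rw [h1]
    exact A.inf_le_left _ _
  · intro h
    rw [prod_eq_diff, A.inf_eq_right h, A.diff_self]

theorem compl_prod_of_D {x y : E} (h : A.D (A.compl x) (A.compl y)) :
    A.compl (A.prod x y) = A.add (A.compl x) (A.compl y) := by
  rw [prod, A.inf_eq_left (A.le_iff_D_compl.2 h), A.compl_compl]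

theorem compl_prod_prod (x y : E) :
    A.prod (A.compl (A.prod x y)) y = A.inf (A.compl x) y := by
  rw [prod_eq_diff, A.compl_compl, A.inf_eq_left (A.prod_le_right x y), prod_eq_diff,
    A.diff_diff (A.inf_le_right _ _)]

theorem prod_compl_of_le {a b : E} (h : A.le a b) : A.prod b (A.compl a) = A.diff b a := by
  rw [prod_eq_diff, A.inf_eq_left (A.compl_le_compl_iff.2 h), A.diff_compl_compl h]

theorem compl_inf_prod (x y z : E) :
    A.prod (A.compl (A.inf (A.compl x) (A.compl y))) z =
      A.compl (A.inf (A.compl (A.prod x z)) (A.compl (A.prod y z))) := by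
  set q := A.inf (A.compl (A.prod x z)) (A.compl (A.prod y z))
  have hqx : A.le (A.prod x z) (A.compl q) := A.le_compl_comm.1 (A.inf_le_left _ _)
  have hqy : A.le (A.prod y z) (A.compl q) := A.le_compl_comm.1 (A.inf_le_right _ _)
  have hqz : A.le (A.compl q) z := by
    rw [A.compl_le_comm]
    exact A.le_inf _ _ _ (A.compl_le_compl_iff.2 (A.prod_le_right x z))
      (A.compl_le_compl_iff.2 (A.prod_le_right y z))
  rw [prod_eq_diff, A.compl_compl]
  set m := A.inf (A.inf (A.compl x) (A.compl y)) z
  have hmz : A.le m z := A.inf_le_right _ _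
  have hm : A.le m (A.inf (A.compl x) (A.compl y)) := A.inf_le_left _ _
  apply A.le_antisymm
  · have hx := A.diff_le_diff hqx hqz
    have hy := A.diff_le_diff hqy hqz
    rw [prod_eq_diff, A.diff_diff (A.inf_le_right _ _)] at hx hy
    have hqm : A.le (A.diff z (A.compl q)) m :=
      A.le_inf _ _ _
        (A.le_inf _ _ _ (A.le_trans hx (A.inf_le_left _ _)) (A.le_trans hy (A.inf_le_left _ _)))
        (A.diff_le hqz)
    have h := A.diff_le_diff hqm hmz
    rwa [A.diff_diff hqz] at h
  · rw [A.compl_le_comm]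
    refine A.le_inf _ _ _ (A.compl_le_compl_iff.2 ?_) (A.compl_le_compl_iff.2 ?_)
    · exact A.diff_le_diff (A.le_inf _ _ _ (A.le_trans hm (A.inf_le_left _ _)) hmz)
        (A.inf_le_right _ _)
    · exact A.diff_le_diff (A.le_inf _ _ _ (A.le_trans hm (A.inf_le_right _ _)) hmz)
        (A.inf_le_right _ _)

theorem prod_assoc_of_D {x y z : E} (hxy : A.D (A.compl x) (A.compl y))
    (hxyz : A.D (A.compl (A.prod x y)) (A.compl z)) :
    A.D (A.compl y) (A.compl z) ∧ A.D (A.compl x) (A.compl (A.prod y z)) ∧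
      A.prod (A.prod x y) z = A.prod x (A.prod y z) := by
  have h := hxyz
  rw [A.compl_prod_of_D hxy] at h
  obtain ⟨hyz, hx, he⟩ := A.E2 _ _ _ hxy h
  rw [← A.compl_prod_of_D hyz] at hx
  refine ⟨hyz, hx, ?_⟩
  rw [← A.compl_compl (A.prod (A.prod x y) z), A.compl_prod_of_D hxyz, A.compl_prod_of_D hxy, he,
    ← A.compl_prod_of_D hyz, ← A.compl_prod_of_D hx, A.compl_compl]

/-- The effect groupoid of a lattice effect algebra. -/
def toEffectGroupoid : EffectGroupoid E where
  mul := A.prod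
  compl := A.compl
  zero := A.zero
  one := A.one
  ng0l x := by
    rw [prod_eq_diff, A.compl_one, A.inf_eq_left (A.zero_le x), A.diff_zero]
  ng0r x := by
    rw [← A.compl_zero, A.prod_compl_of_le (A.zero_le x), A.diff_zero]
  ng1 := A.compl_compl
  ng2l x := A.prod_eq_zero_iff.2 (A.D_comm.1 (A.add_zero x).1)
  ng2r x := A.prod_eq_zero_iff.2 (A.add_zero x).1
  ng3 := A.compl_zero
  ng4l x y := A.prod_eq_zero_iff.2 (A.D_comm.1 (A.D_iff_le_compl.2 (A.prod_le_right _ _)))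
  ng4r x y := A.prod_eq_zero_iff.2 (A.D_iff_le_compl.2 (A.prod_le_right _ _))
  ng5 x y := by
    rw [A.compl_prod_prod, A.compl_compl, A.inf_comm, A.prod_compl_of_le (A.inf_le_right _ _),
      prod_eq_diff]
  ng6a x y := by
    rw [A.compl_prod_prod, A.prod_compl_of_le (A.prod_le_right _ _), prod_eq_diff,
      A.diff_diff (A.inf_le_right _ _)]
  ng6b x y := by
    rw [A.compl_prod_prod, A.compl_prod_prod, A.compl_compl, A.compl_compl, A.inf_comm]
  ng7 x y z := by
    rw [A.compl_prod_prod, A.compl_prod_prod, A.compl_inf_prod]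
  ng8 x y z := by
    simp only [prod_eq_zero_iff]
    exact A.prod_assoc_of_D

end LatticeEffectAlgebra

/-- For a lattice effect algebra `E` with `x·y := ((x'∧y)⊕y')'`, the structure
`(E;·,',0,1)` is an effect groupoid. -/
theorem latticeEffectAlgebra_to_effectGroupoid {E : Type*} (A : LatticeEffectAlgebra E) :
    ∃ G : EffectGroupoid E, G.mul = A.prod ∧ G.compl = A.compl ∧
      G.zero = A.zero ∧ G.one = A.one :=
  ⟨A.toEffectGroupoid, rfl, rfl, rfl, rfl⟩
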